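/- arXiv:1607.08276 — 9 statements merged into one kernel-verified Lean document; each statement's English description precedes it below -/
import Mathlib

section
/- Let A be a 3-Lie algebra over a field F with char F ≠ 2 and let (V, ρ) be a representation of A. Then for all x, y, z, u ∈ A, as linear maps V → V: ρ(x,u)∘ρ(y,z) + ρ(y,z)∘ρ(x,u) + ρ(x,y)∘ρ(z,u) + ρ(z,u)∘ρ(x,y) − ρ(x,z)∘ρ(y,u) − ρ(y,u)∘ρ(x,z) = 0. -/
/-- A trilinear skew-symmetric bracket satisfying the fundamental identity,
i.e. a 3-Lie algebra structure on `A` over the field `F`.  (Linearity in the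
first argument together with skew-symmetry yields trilinearity.) -/
def IsThreeLieBracket (F : Type*) [Field F] {A : Type*} [AddCommGroup A] [Module F A]
    (br : A → A → A → A) : Prop :=
  (∀ x x' y z : A, br (x + x') y z = br x y z + br x' y z) ∧
  (∀ (c : F) (x y z : A), br (c • x) y z = c • br x y z) ∧
  (∀ x y z : A, br y x z = - br x y z) ∧
  (∀ x y z : A, br x z y = - br x y z) ∧
  (∀ x y z u v : A, br (br x y z) u v =
      br (br x u v) y z + br x (br y u v) z + br x y (br z u v))

/-- A derivation of a 3-Lie algebra `(A, br)`. -/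
def IsDer3 (F : Type*) [Field F] {A : Type*} [AddCommGroup A] [Module F A]
    (br : A → A → A → A) (d : A →ₗ[F] A) : Prop :=
  ∀ x y z : A, d (br x y z) = br (d x) y z + br x (d y) z + br x y (d z)

/-- A representation of the 3-Lie algebra `(A, br)` on the vector space `V`. -/
def IsRep3 (F : Type*) [Field F] {A V : Type*} [AddCommGroup A] [Module F A]
    [AddCommGroup V] [Module F V]
    (br : A → A → A → A) (ρ : A →ₗ[F] A →ₗ[F] Module.End F V) : Prop :=
  (∀ x y : A, ρ x y = - ρ y x) ∧
  (∀ x1 x2 x3 x4 : A, ρ x1 x2 * ρ x3 x4 - ρ x3 x4 * ρ x1 x2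
      = ρ (br x1 x2 x3) x4 - ρ (br x1 x2 x4) x3) ∧
  (∀ x1 x2 x3 x4 : A, ρ (br x1 x2 x3) x4
      = ρ x1 x2 * ρ x3 x4 + ρ x2 x3 * ρ x1 x4 + ρ x3 x1 * ρ x2 x4)

/-- The bracket of the `(μ, ρ, β)`-extension of `H` by `M`, on `M ⊕ H`:
the unique trilinear skew-symmetric bracket with `[x,y,z] = [x,y,z]_M + μ(x,y,z)`,
`[x,y,h] = ρ(x,y)h`, `[x,h₁,h₂] = β(x,h₁)h₂` and `[h₁,h₂,h₃] = [h₁,h₂,h₃]_H`. -/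
def extBr (F : Type*) [Field F] {M H : Type*} [AddCommGroup M] [Module F M]
    [AddCommGroup H] [Module F H]
    (brM : M → M → M → M) (brH : H → H → H → H)
    (μ : M →ₗ[F] M →ₗ[F] M →ₗ[F] H)
    (ρ : M →ₗ[F] M →ₗ[F] Module.End F H)
    (β : M →ₗ[F] H →ₗ[F] Module.End F H) :
    M × H → M × H → M × H → M × H :=
  fun a b c =>
    (brM a.1 b.1 c.1,
     μ a.1 b.1 c.1 + ρ a.1 b.1 c.2 + ρ c.1 a.1 b.2 + ρ b.1 c.1 a.2
       + β a.1 b.2 c.2 + β b.1 c.2 a.2 + β c.1 a.2 b.2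
       + brH a.2 b.2 c.2)

/-- The bracket of the exterior direct sum 3-Lie algebra `A³ = A × A × A`. -/
def tripleBr {A : Type*} [AddCommGroup A]
    (br : A → A → A → A) : A × A × A → A × A × A → A × A × A → A × A × A :=
  fun a b c =>
    (br a.1 b.2.1 c.2.1 + br b.1 c.2.1 a.2.1 + br c.1 a.2.1 b.2.1,
     br a.2.1 b.2.1 c.2.1,
     br a.2.2 b.2.2 c.2.2)

/-- Lemma 2.1, Eq. (4): for a representation `(V, ρ)` of a 3-Lie algebra `A`,
`ρ(x,u)ρ(y,z) + ρ(y,z)ρ(x,u) + ρ(x,y)ρ(z,u) + ρ(z,u)ρ(x,y)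
  − ρ(x,z)ρ(y,u) − ρ(y,u)ρ(x,z) = 0` as linear maps `V → V`. -/
theorem stmt1 {F A V : Type*} [Field F] [AddCommGroup A] [Module F A]
    [AddCommGroup V] [Module F V] (hchar : (2 : F) ≠ 0)
    (br : A → A → A → A) (hbr : IsThreeLieBracket F br)
    (ρ : A →ₗ[F] A →ₗ[F] Module.End F V) (hρ : IsRep3 F br ρ)
    (x y z u : A) :
    ρ x u * ρ y z + ρ y z * ρ x u + ρ x y * ρ z u + ρ z u * ρ x y
      - ρ x z * ρ y u - ρ y u * ρ x z = 0 := by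
  obtain ⟨hs, h2, h3⟩ := hρ
  have e := h2 x y z u
  rw [h3 x y z u, h3 x y u z, hs z x, hs u z, hs u x] at e
  simp only [neg_mul, mul_neg] at e
  rw [← sub_eq_zero] at e
  rw [← neg_eq_zero, ← e]
  abel
end

section
/- Let M and H be 3-Lie algebras over a field F with char F ≠ 2, let ρ : M × M → Der(H) be bilinear skew-symmetric, β : M × H → Der(H) bilinear, and μ : M × M × M → H trilinear skew-symmetric. Assume that for all x1,x2,x3,x4 ∈ M, as linear maps H → H: ρ(x4,[x1,x2,x3]) = ρ(x3,x1)∘ρ(x4,x2) − ρ(x2,x1)∘ρ(x4,x3) + ρ(x2,x3)∘ρ(x4,x1) − β(x4, μ(x1,x2,x3)). Then the identity ρ(x,u)∘ρ(y,z) + ρ(y,z)∘ρ(x,u) + ρ(x,y)∘ρ(z,u) + ρ(z,u)∘ρ(x,y) − ρ(x,z)∘ρ(y,u) − ρ(y,u)∘ρ(x,z) = 0 holds for all x,y,z,u ∈ M if and only if for all x1,x2,x3,x4 ∈ M: ρ(x4,[x1,x2,x3]) = ρ(x3,[x1,x2,x4]) − β(x4, μ(x1,x2,x3)) + β(x3,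 μ(x1,x2,x4)) − ρ(x1,x2)∘ρ(x3,x4) + ρ(x3,x4)∘ρ(x1,x2). -/
/-- Lemma 3.2: under Eq. (7), identity (4) holds iff Eq. (8) holds. -/
theorem stmt2 {F M H : Type*} [Field F] [AddCommGroup M] [Module F M]
    [AddCommGroup H] [Module F H] (hchar : (2 : F) ≠ 0)
    (brM : M → M → M → M) (hM : IsThreeLieBracket F brM)
    (brH : H → H → H → H) (hH : IsThreeLieBracket F brH)
    (ρ : M →ₗ[F] M →ₗ[F] Module.End F H)
    (hρskew : ∀ x y : M, ρ x y = - ρ y x)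
    (hρder : ∀ x y : M, IsDer3 F brH (ρ x y))
    (β : M →ₗ[F] H →ₗ[F] Module.End F H)
    (hβder : ∀ (x : M) (h : H), IsDer3 F brH (β x h))
    (μ : M →ₗ[F] M →ₗ[F] M →ₗ[F] H)
    (hμ12 : ∀ x y z : M, μ y x z = - μ x y z)
    (hμ23 : ∀ x y z : M, μ x z y = - μ x y z)
    (hb2 : ∀ x1 x2 x3 x4 : M,
      ρ x4 (brM x1 x2 x3)
        = ρ x3 x1 * ρ x4 x2 - ρ x2 x1 * ρ x4 x3 + ρ x2 x3 * ρ x4 x1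
          - β x4 (μ x1 x2 x3)) :
    (∀ x y z u : M,
        ρ x u * ρ y z + ρ y z * ρ x u + ρ x y * ρ z u + ρ z u * ρ x y
          - ρ x z * ρ y u - ρ y u * ρ x z = 0)
    ↔ (∀ x1 x2 x3 x4 : M,
        ρ x4 (brM x1 x2 x3)
          = ρ x3 (brM x1 x2 x4) - β x4 (μ x1 x2 x3) + β x3 (μ x1 x2 x4)
            - ρ x1 x2 * ρ x3 x4 + ρ x3 x4 * ρ x1 x2) := by
  have key : ∀ a b c d : M,
      ρ d (brM a b c) - (ρ c (brM a b d) - β d (μ a b c) + β c (μ a b d)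
            - ρ a b * ρ c d + ρ c d * ρ a b)
      = -(ρ a d * ρ b c + ρ b c * ρ a d + ρ a b * ρ c d + ρ c d * ρ a b
          - ρ a c * ρ b d - ρ b d * ρ a c) := by
    intro a b c d
    rw [hb2 a b c d, hb2 a b d c, hρskew c a, hρskew d b, hρskew b a, hρskew d c,
      hρskew d a, hρskew c b]
    noncomm_ring
  constructor
  · intro h a b c d
    rw [← sub_eq_zero, key, h, neg_zero]
  · intro h a b c d
    rw [← neg_eq_zero, ← key, sub_eq_zero]
    exact h a b c d
end

section
/- Let M and H be 3-Lie algebras over a field F with char F ≠ 2, let ρ : M × M → Der(H) be bilinear skew-symmetric and β : M × H → Der(H) bilinear (so each ρ(x,y) and β(x,h) is a derivation of H). Assume that for all x, y ∈ M and h1, h2, h ∈ H: β(y,h2)β(x,h1)h − β(y,h)β(x,h1)h2 − β(x,h1)β(y,h2)h = [ρ(x,y)h1, h2, h]_H. Then for all x, y ∈ M and h1, h2, h ∈ H: ρ(x,y)[h1,h2,h]_H + β(y,h1)β(x,h2)h − β(x,h1)β(y,h2)h = [ρ(x,y)h1, h2, h]_H. -/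
/-- Lemma 3.3: if `β(y,h₂)β(x,h₁)h − β(y,h)β(x,h₁)h₂ − β(x,h₁)β(y,h₂)h = [ρ(x,y)h₁,h₂,h]_H`,
then `ρ(x,y)[h₁,h₂,h]_H + β(y,h₁)β(x,h₂)h − β(x,h₁)β(y,h₂)h = [ρ(x,y)h₁,h₂,h]_H`. -/
theorem stmt3 {F M H : Type*} [Field F] [AddCommGroup M] [Module F M]
    [AddCommGroup H] [Module F H] (hchar : (2 : F) ≠ 0)
    (brM : M → M → M → M) (hM : IsThreeLieBracket F brM)
    (brH : H → H → H → H) (hH : IsThreeLieBracket F brH)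
    (ρ : M →ₗ[F] M →ₗ[F] Module.End F H)
    (hρskew : ∀ x y : M, ρ x y = - ρ y x)
    (hρder : ∀ x y : M, IsDer3 F brH (ρ x y))
    (β : M →ₗ[F] H →ₗ[F] Module.End F H)
    (hβder : ∀ (x : M) (h : H), IsDer3 F brH (β x h))
    (hyp : ∀ (x y : M) (h1 h2 h : H),
      β y h2 (β x h1 h) - β y h (β x h1 h2) - β x h1 (β y h2 h)
        = brH (ρ x y h1) h2 h) :
    ∀ (x y : M) (h1 h2 h : H),
      ρ x y (brH h1 h2 h) + β y h1 (β x h2 h) - β x h1 (β y h2 h)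
        = brH (ρ x y h1) h2 h := by
  obtain ⟨-, hHs, h12, h23, -⟩ := hH
  intro x y a b c
  have skewP : ∀ (x y : M) (a b c : H), β x a (β y b c) = - β x a (β y c b) := by
    intro x y a b c
    have e1 := hyp x y a b c
    have e2 := hyp x y a c b
    rw [h23 _ b c] at e2
    linear_combination (norm := module) -e1 - e2
  have R : ∀ a b c : H, brH (ρ y x a) b c = - brH (ρ x y a) b c := by
    intro a b c
    have hn : ∀ u : H, brH (-u) b c = - brH u b c := by
      intro u
      have := hHs (-1 : F) u b c
      simpa using this
    rw [hρskew y x, LinearMap.neg_apply, hn]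
  have hS := hρder x y a b c
  have r1 : brH a (ρ x y b) c = brH (ρ x y b) c a := by
    rw [h12 (ρ x y b) a c, h23 (ρ x y b) c a, neg_neg]
  have r2 : brH a b (ρ x y c) = brH (ρ x y c) a b := by
    rw [h23 a (ρ x y c) b, h12 (ρ x y c) a b, neg_neg]
  rw [r1, r2] at hS
  have b1 := hyp x y b c a
  have c1 := hyp x y c a b
  have b2 := hyp y x b c a
  have c2 := hyp y x c a b
  rw [R] at b2 c2
  have k1 := skewP y x b a c
  have k2 := skewP y x c b a
  have k3 := skewP y x a c b
  have k4 := skewP x y b a c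
  have k5 := skewP x y c b a
  have k6 := skewP x y a c b
  have key : (2 : F) • (ρ x y (brH a b c) + β y a (β x b c) - β x a (β y b c)
      - brH (ρ x y a) b c) = 0 := by
    rw [hS, two_smul]
    rw [k2] at b1
    rw [k3] at c1
    rw [k5] at b2
    rw [k6] at c2
    linear_combination (norm := module) -b1 - c1 + b2 + c2
  exact sub_eq_zero.mp ((smul_eq_zero.mp key).resolve_left hchar)
end

section
/- Let A = M ⊕ H be the (μ,ρ,β)-extension of H by M. Then A is a 3-Lie algebra if and only if the following identities hold for all x1,x2,x3,x4,x5, x, y, z, u ∈ M and h, h1, h2, h3, h4 ∈ H: (i) ρ(x,u)∘ρ(y,z) + ρ(y,z)∘ρ(x,u) + ρ(x,y)∘ρ(z,u) + ρ(z,u)∘ρ(x,y) − ρ(x,z)∘ρ(y,u) − ρ(y,u)∘ρ(x,z) = 0; (ii) ρ(x4,[x1,x2,x3]_M) = ρ(x3,x1)∘ρ(x4,x2) − ρ(x2,x1)∘ρ(x4,x3) + ρ(x2,x3)∘ρ(x4,x1) − β(x4, μ(x1,x2,x3)); (iii) β(y,h2)β(x,h1)h − β(y,h)β(x,h1)h2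 − β(x,h1)β(y,h2)h = [ρ(x,y)h1, h2, h]_H; (iv) [β(x,h1)h3, h2, h4]_H + [h3, β(x,h1)h2, h4]_H + [β(x,h3)h2, h1, h4]_H = β(x,[h1,h2,h3]_H)h4; (v) [μ(x1,x2,x3), h1, h2]_H = ρ(x2,x3)β(x1,h1)h2 − ρ(x1,x3)β(x2,h1)h2 + ρ(x1,x2)β(x3,h1)h2 − β([x1,x2,x3]_M, h1)h2; (vi) β(x1,h1)ρ(x2,x3)h2 + β(x3,h2)ρ(x1,x2)h1 = ρ(x2,x3)β(x1,h1)h2 + β(x2,h2)ρ(x1,x3)h1; (vii) μ(x1,x2,[x3,x4,x5]_M) − μ([x1,x2,x3]_M,x4,x5) − μ(x3,[x1,x2,x4]_M,x5) − μ(x3,x4,[x1,x2,x5]_M) = ρ(x3,x4)μ(x1,x2,x5) − ρ(x3,x5)μ(x1,x2,x4) − ρ(x1,x2)μ(x3,x4,x5) + ρ(x4,x5)μ(x1,x2,x3). -/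
set_option linter.unusedSimpArgs false

/-- Additivity and skew-symmetry consequences. -/
theorem tri_aux {A : Type*} [AddCommGroup A] (br : A → A → A → A)
    (h1 : ∀ x x' y z : A, br (x + x') y z = br x y z + br x' y z)
    (h3 : ∀ x y z : A, br y x z = - br x y z)
    (h4 : ∀ x y z : A, br x z y = - br x y z) :
    (∀ x y y' z : A, br x (y + y') z = br x y z + br x y' z) ∧
    (∀ x y z z' : A, br x y (z + z') = br x y z + br x y z') ∧
    (∀ y z : A, br 0 y z = 0) ∧ (∀ x z : A, br x 0 z = 0) ∧ (∀ x y : A, br x y 0 = 0) ∧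
    (∀ x y z : A, br (-x) y z = - br x y z) ∧
    (∀ x y z : A, br x (-y) z = - br x y z) ∧
    (∀ x y z : A, br x y (-z) = - br x y z) := by
  have a2 : ∀ x y y' z : A, br x (y + y') z = br x y z + br x y' z := by
    intro x y y' z
    rw [h3 (y + y') x z, h1, h3 y x z, h3 y' x z]; abel
  have a3 : ∀ x y z z' : A, br x y (z + z') = br x y z + br x y z' := by
    intro x y z z'
    rw [h4 x (z + z') y, a2, h4 x z y, h4 x z' y]; abel
  have z1 : ∀ y z : A, br 0 y z = 0 := fun y z => by
    have := h1 0 0 y z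
    simpa using this
  have z2 : ∀ y z : A, br y 0 z = 0 := fun y z => by rw [h3 0 y z, z1, neg_zero]
  have z3 : ∀ y z : A, br y z 0 = 0 := fun y z => by rw [h4 y 0 z, z2, neg_zero]
  refine ⟨a2, a3, z1, z2, z3, ?_, ?_, ?_⟩
  · intro x y z
    have := h1 x (-x) y z
    rw [add_neg_cancel, z1] at this
    exact (neg_eq_of_add_eq_zero_right this.symm).symm
  · intro x y z
    have := a2 x y (-y) z
    rw [add_neg_cancel, z2] at this
    exact (neg_eq_of_add_eq_zero_right this.symm).symm
  · intro x y z
    have := a3 x y z (-z)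
    rw [add_neg_cancel, z3] at this
    exact (neg_eq_of_add_eq_zero_right this.symm).symm

/-- The fundamental identity at five given elements. -/
def FIat {A : Type*} [AddCommGroup A] (br : A → A → A → A) (x y z u v : A) : Prop :=
  br (br x y z) u v = br (br x u v) y z + br x (br y u v) z + br x y (br z u v)

theorem FI_of_pure {M H : Type*} [AddCommGroup M] [AddCommGroup H]
    (br : M × H → M × H → M × H → M × H)
    (h1 : ∀ x x' y z, br (x + x') y z = br x y z + br x' y z)
    (h3 : ∀ x y z, br y x z = - br x y z)
    (h4 : ∀ x y z, br x z y = - br x y z)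
    (c0 : ∀ x y z u v : M, FIat br (x,0) (y,0) (z,0) (u,0) (v,0))
    (c1 : ∀ (x y z u : M) (h : H), FIat br (x,0) (y,0) (0,h) (z,0) (u,0))
    (c2 : ∀ (x y z u : M) (h : H), FIat br (x,0) (y,0) (z,0) (u,0) (0,h))
    (c3 : ∀ (x u v : M) (h k : H), FIat br (x,0) (0,h) (0,k) (u,0) (v,0))
    (c4 : ∀ (x y u : M) (h k : H), FIat br (x,0) (y,0) (0,h) (u,0) (0,k))
    (c5 : ∀ (x y z : M) (h k : H), FIat br (x,0) (y,0) (z,0) (0,h) (0,k))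
    (c6 : ∀ (u v : M) (h k l : H), FIat br (0,h) (0,k) (0,l) (u,0) (v,0))
    (c7 : ∀ (x u : M) (h k l : H), FIat br (x,0) (0,h) (0,k) (u,0) (0,l))
    (c8 : ∀ (x y : M) (h k l : H), FIat br (x,0) (y,0) (0,h) (0,k) (0,l))
    (c9 : ∀ (u : M) (h k l m : H), FIat br (0,h) (0,k) (0,l) (u,0) (0,m))
    (c10 : ∀ (x : M) (h k l m : H), FIat br (x,0) (0,h) (0,k) (0,l) (0,m))
    (c11 : ∀ (h k l m n : H), FIat br (0,h) (0,k) (0,l) (0,m) (0,n)) :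
    ∀ x y z u v, FIat br x y z u v := by
  obtain ⟨a2, a3, z1, z2, z3, n1, n2, n3⟩ := tri_aux br h1 h3 h4
  have s12 : ∀ x y z u v, FIat br x y z u v → FIat br y x z u v := by
    intro x y z u v h
    unfold FIat at *
    rw [h3 x y z, n1, h, h3 x (br y u v) z, h3 (br x u v) y z, h3 x y (br z u v)]
    abel
  have s23 : ∀ x y z u v, FIat br x y z u v → FIat br x z y u v := by
    intro x y z u v h
    unfold FIat at *
    rw [h4 x y z, n1, h, h4 (br x u v) y z, h4 x y (br z u v), h4 x (br y u v) z]
    abel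
  have s45 : ∀ x y z u v, FIat br x y z u v → FIat br x y z v u := by
    intro x y z u v h
    unfold FIat at *
    rw [h4 (br x y z) u v, h, h4 x u v, h4 y u v, h4 z u v, n1, n2, n3]
    abel
  have p1 : ∀ x x' y z u v, FIat br x y z u v → FIat br x' y z u v →
      FIat br (x + x') y z u v := by
    intro x x' y z u v h h'
    unfold FIat at *
    simp only [h1, h, h']
    abel
  have p4 : ∀ x y z u u' v, FIat br x y z u v → FIat br x y z u' v →
      FIat br x y z (u + u') v := by
    intro x y z u u' v h h'
    unfold FIat at *
    simp only [h1, a2, a3, h, h']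
    abel
  have dec : ∀ a : M × H, a = (a.1, 0) + (0, a.2) := fun a => by simp
  have q : ∀ x y z u v, (∀ u v, FIat br (x.1,0) y z u v) → (∀ u v, FIat br (0,x.2) y z u v) →
      FIat br x y z u v := by
    intro x y z u v h h'
    rw [dec x]; exact p1 _ _ _ _ _ _ (h _ _) (h' _ _)
  have r : ∀ x y z, (∀ u v : M, FIat br x y z (u,0) (v,0)) →
      (∀ (u : M) (k : H), FIat br x y z (u,0) (0,k)) →
      (∀ h k : H, FIat br x y z (0,h) (0,k)) → ∀ u v, FIat br x y z u v := by
    intro x y z e1 e2 e3 u v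
    rw [dec u]; apply p4
    · apply s45; rw [dec v]; apply p4
      · exact e1 _ _
      · exact s45 _ _ _ _ _ (e2 _ _)
    · apply s45; rw [dec v]; apply p4
      · exact e2 _ _
      · exact e3 _ _
  have r0 : ∀ (x y z : M) u v, FIat br (x,0) (y,0) (z,0) u v := fun x y z =>
    r _ _ _ (fun u v => c0 _ _ _ _ _) (fun u v => c2 _ _ _ _ _) (fun u v => c5 _ _ _ _ _)
  have r1 : ∀ (x y : M) (z : H) u v, FIat br (x,0) (y,0) (0,z) u v := fun x y z =>
    r _ _ _ (fun u v => c1 _ _ _ _ _) (fun u v => c4 _ _ _ _ _) (fun u v => c8 _ _ _ _ _)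
  have r2 : ∀ (x : M) (y z : H) u v, FIat br (x,0) (0,y) (0,z) u v := fun x y z =>
    r _ _ _ (fun u v => c3 _ _ _ _ _) (fun u v => c7 _ _ _ _ _) (fun u v => c10 _ _ _ _ _)
  have r3 : ∀ (x y z : H) u v, FIat br (0,x) (0,y) (0,z) u v := fun x y z =>
    r _ _ _ (fun u v => c6 _ _ _ _ _) (fun u v => c9 _ _ _ _ _) (fun u v => c11 _ _ _ _ _)
  intro x y z u v
  apply q <;> intro u v <;> apply s12 <;> apply q <;> intro u v <;> apply s23 <;> apply s12 <;>
    apply q <;> intro u v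
  · exact r0 _ _ _ _ _
  · exact s12 _ _ _ _ _ (s23 _ _ _ _ _ (r1 _ _ _ _ _))
  · exact s23 _ _ _ _ _ (r1 _ _ _ _ _)
  · exact s12 _ _ _ _ _ (s23 _ _ _ _ _ (s12 _ _ _ _ _ (s23 _ _ _ _ _ (r2 _ _ _ _ _))))
  · exact r1 _ _ _ _ _
  · exact s12 _ _ _ _ _ (r2 _ _ _ _ _)
  · exact r2 _ _ _ _ _
  · exact r3 _ _ _ _ _

set_option maxHeartbeats 4000000 in
/-- Theorem 3.5: the `(μ,ρ,β)`-extension `A = M ⊕ H` is a 3-Lie algebra iff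
identities (i)–(vii) hold. -/
theorem stmt5 {F M H : Type*} [Field F] [AddCommGroup M] [Module F M]
    [AddCommGroup H] [Module F H] (hchar : (2 : F) ≠ 0)
    (brM : M → M → M → M) (hM : IsThreeLieBracket F brM)
    (brH : H → H → H → H) (hH : IsThreeLieBracket F brH)
    (μ : M →ₗ[F] M →ₗ[F] M →ₗ[F] H)
    (hμ12 : ∀ x y z : M, μ y x z = - μ x y z)
    (hμ23 : ∀ x y z : M, μ x z y = - μ x y z)
    (ρ : M →ₗ[F] M →ₗ[F] Module.End F H)
    (hρskew : ∀ x y : M, ρ x y = - ρ y x)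
    (hρder : ∀ x y : M, IsDer3 F brH (ρ x y))
    (β : M →ₗ[F] H →ₗ[F] Module.End F H)
    (hβder : ∀ (x : M) (h : H), IsDer3 F brH (β x h))
    (hβskew : ∀ (x : M) (h1 h2 : H), β x h1 h2 = - β x h2 h1) :
    IsThreeLieBracket F (extBr F brM brH μ ρ β) ↔
      ((∀ x y z u : M,
          ρ x u * ρ y z + ρ y z * ρ x u + ρ x y * ρ z u + ρ z u * ρ x y
            - ρ x z * ρ y u - ρ y u * ρ x z = 0) ∧
       (∀ x1 x2 x3 x4 : M,
          ρ x4 (brM x1 x2 x3)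
            = ρ x3 x1 * ρ x4 x2 - ρ x2 x1 * ρ x4 x3 + ρ x2 x3 * ρ x4 x1
              - β x4 (μ x1 x2 x3)) ∧
       (∀ (x y : M) (h1 h2 h : H),
          β y h2 (β x h1 h) - β y h (β x h1 h2) - β x h1 (β y h2 h)
            = brH (ρ x y h1) h2 h) ∧
       (∀ (x : M) (h1 h2 h3 h4 : H),
          brH (β x h1 h3) h2 h4 + brH h3 (β x h1 h2) h4 + brH (β x h3 h2) h1 h4
            = β x (brH h1 h2 h3) h4) ∧
       (∀ (x1 x2 x3 : M) (h1 h2 : H),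
          brH (μ x1 x2 x3) h1 h2
            = ρ x2 x3 (β x1 h1 h2) - ρ x1 x3 (β x2 h1 h2) + ρ x1 x2 (β x3 h1 h2)
              - β (brM x1 x2 x3) h1 h2) ∧
       (∀ (x1 x2 x3 : M) (h1 h2 : H),
          β x1 h1 (ρ x2 x3 h2) + β x3 h2 (ρ x1 x2 h1)
            = ρ x2 x3 (β x1 h1 h2) + β x2 h2 (ρ x1 x3 h1)) ∧
       (∀ x1 x2 x3 x4 x5 : M,
          μ x1 x2 (brM x3 x4 x5) - μ (brM x1 x2 x3) x4 x5
            - μ x3 (brM x1 x2 x4) x5 - μ x3 x4 (brM x1 x2 x5)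
            = ρ x3 x4 (μ x1 x2 x5) - ρ x3 x5 (μ x1 x2 x4)
              - ρ x1 x2 (μ x3 x4 x5) + ρ x4 x5 (μ x1 x2 x3))) := by
  obtain ⟨M1, M2, M3, M4, M5⟩ := hM
  obtain ⟨H1, H2, H3, H4, H5⟩ := hH
  obtain ⟨Ma2, Ma3, Mz1, Mz2, Mz3, Mn1, Mn2, Mn3⟩ := tri_aux brM M1 M3 M4
  obtain ⟨Ha2, Ha3, Hz1, Hz2, Hz3, Hn1, Hn2, Hn3⟩ := tri_aux brH H1 H3 H4
  have hρ : ∀ x y h, ρ x y h = - ρ y x h := fun x y h => by rw [hρskew x y]; rfl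
  have Hs2 : ∀ (c : F) x y z, brH x (c • y) z = c • brH x y z := by
    intro c x y z
    rw [H3 (c • y) x z, H2, H3 y x z, smul_neg]
  have Hs3 : ∀ (c : F) x y z, brH x y (c • z) = c • brH x y z := by
    intro c x y z
    rw [H4 x (c • z) y, Hs2, H4 x z y, smul_neg]
  have hc : ∀ x y z, μ x y z = μ y z x := fun x y z => by rw [hμ23 y x z, hμ12 x y z, neg_neg]
  have Mc : ∀ x y z, brM x y z = brM y z x := fun x y z => by rw [M4 y x z, M3 x y z, neg_neg]
  have Hc : ∀ x y z, brH x y z = brH y z x := fun x y z => by rw [H4 y x z, H3 x y z, neg_neg]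
  have P2 : ∀ p x s t q, brH p (β x s t) q = - brH (β x s t) p q := fun p x s t q => H3 _ _ _
  have P3 : ∀ p x s t q, brH p q (β x s t) = brH (β x s t) p q :=
    fun p x s t q => (Hc _ _ _).symm
  have hs : ∀ s t p, brH p t s = - brH p s t := fun s t p => H4 _ _ _
  simp only [IsDer3] at hρder hβder
  constructor
  · rintro ⟨-, -, -, -, FI⟩
    have ii : ∀ (x1 x2 x3 x4 : M) (h : H), ρ x4 (brM x1 x2 x3) h
            = ρ x3 x1 (ρ x4 x2 h) - ρ x2 x1 (ρ x4 x3 h) + ρ x2 x3 (ρ x4 x1 h)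
              - β x4 (μ x1 x2 x3) h := by
      intro x y z u h
      have := congrArg Prod.snd (FI (x,0) (y,0) (z,0) (u,0) (0,h))
      simp [extBr, Mz1, Mz2, Mz3, Hz1, Hz2, Hz3] at this
      rw [hρ u (brM x y z) h, hρ u y h, hρ u z h, hρ u x h, hρ y x, hβskew u (μ x y z) h]
      simp only [map_neg, LinearMap.neg_apply, Hn1, neg_neg]
      linear_combination (norm := module) -this
    refine ⟨?_, ?_, ?_, ?_, ?_, ?_, ?_⟩
    · intro x y u v
      ext h
      have := congrArg Prod.snd (FI (x,0) (y,0) (0,h) (u,0) (v,0))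
      simp [extBr, Mz1, Mz2, Mz3, Hz1, Hz2, Hz3] at this
      rw [hρ (brM x u v) y h, hβskew y h (μ x u v), ii y u v x h, ii x u v y h,
        hρ v y, hρ u y, hρ v x, hρ u x, hρ y x h] at this
      simp only [map_neg, LinearMap.neg_apply, Hn1, neg_neg] at this
      change ρ x v (ρ y u h) + ρ y u (ρ x v h) + ρ x y (ρ u v h)
        + ρ u v (ρ x y h) - ρ x u (ρ y v h) - ρ y v (ρ x u h) = 0
      linear_combination (norm := module) -this
    · intro x1 x2 x3 x4
      ext h
      exact ii x1 x2 x3 x4 h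
    · intro x y h1 h2 h
      have := congrArg Prod.snd (FI (y,0) (0,h2) (0,h) (x,0) (0,h1))
      simp [extBr, Mz1, Mz2, Mz3, Hz1, Hz2, Hz3] at this
      rw [hρ y x h1, hβskew y (β x h1 h2) h, Hn1] at this
      linear_combination (norm := module) -this
    · intro x a b c d
      have := congrArg Prod.snd (FI (x,0) (0,a) (0,b) (0,c) (0,d))
      simp [extBr, Mz1, Mz2, Mz3, Hz1, Hz2, Hz3] at this
      rw [hβskew x (brH a c d) b] at this
      rw [hβskew x (brH a b c) d]
      simp only [P2, P3, hβder, hβskew x b a, hβskew x c a, hβskew x d a, hβskew x c b, hβskew x d b, hβskew x d c,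
        hs a b, hs a c, hs a d, hs b c, hs b d, hs c d, Hn1, Hn2, Hn3, neg_neg, map_neg, LinearMap.neg_apply] at this ⊢
      linear_combination (norm := module) this
    · intro x y z h k
      have := congrArg Prod.snd (FI (x,0) (y,0) (z,0) (0,h) (0,k))
      simp [extBr, Mz1, Mz2, Mz3, Hz1, Hz2, Hz3] at this
      rw [hρ x z]
      linear_combination (norm := module) this
    · intro x1 x2 x3 h1 h2
      have := congrArg Prod.snd (FI (x2,0) (x3,0) (0,h2) (x1,0) (0,h1))
      simp [extBr, Mz1, Mz2, Mz3, Hz1, Hz2, Hz3] at this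
      rw [hρ x2 x1 h1, hβskew x2 (ρ x3 x1 h1) h2, hρ x3 x1 h1] at this
      simp only [map_neg, LinearMap.neg_apply, Hn1, neg_neg] at this
      linear_combination (norm := module) this
    · intro x1 x2 x3 x4 x5
      have := congrArg Prod.snd (FI (x3,0) (x4,0) (x5,0) (x1,0) (x2,0))
      simp [extBr, Mz1, Mz2, Mz3, Hz1, Hz2, Hz3] at this
      rw [hc (brM x3 x4 x5) x1 x2, hc x3 x1 x2, hc x4 x1 x2, hc x5 x1 x2, Mc x3 x1 x2,
        Mc x4 x1 x2, Mc x5 x1 x2, hρ x5 x3] at this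
      linear_combination (norm := module) this
  · rintro ⟨i, ii, iii, iv, v, vi, vii⟩
    have i' : ∀ (x y z u : M) (h : H), ρ x u (ρ y z h) + ρ y z (ρ x u h) + ρ x y (ρ z u h)
        + ρ z u (ρ x y h) - ρ x z (ρ y u h) - ρ y u (ρ x z h) = 0 :=
      fun x y z u h => LinearMap.congr_fun (i x y z u) h
    have ii' : ∀ (x1 x2 x3 x4 : M) (h : H), ρ x4 (brM x1 x2 x3) h
            = ρ x3 x1 (ρ x4 x2 h) - ρ x2 x1 (ρ x4 x3 h) + ρ x2 x3 (ρ x4 x1 h)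
              - β x4 (μ x1 x2 x3) h :=
      fun x y z u h => LinearMap.congr_fun (ii x y z u) h
    have E1 : ∀ a a' b c, extBr F brM brH μ ρ β (a + a') b c =
        extBr F brM brH μ ρ β a b c + extBr F brM brH μ ρ β a' b c := by
      intro a a' b c
      ext
      · simp [extBr, M1]
      · simp [extBr, H1]; abel
    have E3 : ∀ a b c, extBr F brM brH μ ρ β b a c = - extBr F brM brH μ ρ β a b c := by
      intro a b c
      ext
      · exact M3 _ _ _
      · simp only [extBr, Prod.snd_neg]
        rw [hμ12 a.1, hρ b.1 a.1, hρ c.1 b.1, hρ a.1 c.1, hβskew b.1, hβskew a.1, hβskew c.1,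
          H3 a.2]
        abel
    have E4 : ∀ a b c, extBr F brM brH μ ρ β a c b = - extBr F brM brH μ ρ β a b c := by
      intro a b c
      ext
      · exact M4 _ _ _
      · simp only [extBr, Prod.snd_neg]
        rw [hμ23 a.1, hρ b.1 a.1, hρ c.1 b.1, hρ a.1 c.1, hβskew b.1, hβskew a.1, hβskew c.1,
          H4 a.2]
        abel
    refine ⟨E1, ?_, E3, E4, ?_⟩
    · intro c a b d
      ext
      · simp [extBr, M2]
      · simp [extBr, H2]
    · refine FI_of_pure _ E1 E3 E4 ?_ ?_ ?_ ?_ ?_ ?_ ?_ ?_ ?_ ?_ ?_ ?_ <;>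
      intro a b c d e <;> unfold FIat <;> ext <;>
      simp [extBr, Mz1, Mz2, Mz3, Hz1, Hz2, Hz3]
      · exact M5 _ _ _ _ _
      · have := vii d e a b c
        rw [hc (brM a b c) d e, hc a d e, hc b d e, hc c d e, Mc a d e, Mc b d e, Mc c d e, hρ c a]
        linear_combination (norm := module) this
      · rw [hρ (brM a c d) b e, hβskew b e (μ a c d), ii' b c d a e, ii' a c d b e,
          hρ d b, hρ c b, hρ d a, hρ c a, hρ b a e]
        simp only [map_neg, LinearMap.neg_apply, Hn1, neg_neg]
        linear_combination (norm := module) -(i' a b c d e)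
      · have := ii' a b c d e
        rw [hρ d (brM a b c) e, hρ d b e, hρ d c e, hρ d a e, hρ b a, hβskew d (μ a b c) e] at this
        simp only [map_neg, LinearMap.neg_apply, Hn1, neg_neg] at this
        linear_combination (norm := module) -this
      · have v2 := vi c a b d e
        have v3 := vi b a c e d
        rw [hρ c a d, hρ c b d] at v2
        rw [hρ b a e, hβskew b e d] at v3
        rw [v a b c d e, hβskew a (ρ b c d) e]
        simp only [map_neg, LinearMap.neg_apply, Hn1, neg_neg] at v2 v3
        linear_combination (norm := module) v2 + v3
      · have := vi c a b e d
        rw [hρ c a, hρ c b] at this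
        rw [hβskew a (ρ b c e) d]
        simp only [map_neg, LinearMap.neg_apply, Hn1, neg_neg] at this
        linear_combination (norm := module) this
      · rw [v a b c d e, hρ c a]
        abel
      · exact hρder _ _ _ _ _
      · have := iii b a e c d
        rw [hρ b a e, Hn1] at this
        rw [hβskew a (β b e c) d]
        linear_combination (norm := module) -this
      · have k1 := iii a b d c e
        have k2 := iii a b e c d
        have k3 := iii a b c d e
        have k4 := iii b a c d e
        rw [hρ b a c, Hn1] at k4
        rw [hρder, hβskew a (β b d e) c, H3 (ρ a b d) c e, ← Hc (ρ a b e) c d]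
        simp only [hβskew a e c, hβskew a e d, hβskew a d c, hβskew b e c, hβskew b e d,
          hβskew b d c, map_neg] at k1 k2 k3 k4 ⊢
        linear_combination (norm := module) -k1 + k2 - k3 - k4
      · exact hβder _ _ _ _ _
      · have := iv a b c d e
        rw [hβskew a (brH b c d) e] at this
        rw [hβskew a (brH b d e) c]
        simp only [P2, P3, hβder, hβskew a c b, hβskew a d b, hβskew a e b, hβskew a d c, hβskew a e c, hβskew a e d,
        hs b c, hs b d, hs b e, hs c d, hs c e, hs d e, Hn1, Hn2, Hn3, neg_neg, map_neg, LinearMap.neg_apply] at this ⊢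
        linear_combination (norm := module) this
      · exact H5 _ _ _ _ _
end

section
/- Let A = M ⊕ H be a (μ,ρ,β)-extension of H by M which is a 3-Lie algebra. Then (H, ρ) is an M-module (i.e. ρ is a representation of M on H) if and only if β(x4, μ(x1,x2,x3)) = 0 for all x1, x2, x3, x4 ∈ M. -/
/-- Theorem 3.7: for a `(μ,ρ,β)`-extension 3-Lie algebra `A = M ⊕ H`,
`(H, ρ)` is an `M`-module iff `β(M, μ(M,M,M)) = 0`. -/
theorem stmt7 {F M H : Type*} [Field F] [AddCommGroup M] [Module F M]
    [AddCommGroup H] [Module F H] (hchar : (2 : F) ≠ 0)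
    (brM : M → M → M → M) (hM : IsThreeLieBracket F brM)
    (brH : H → H → H → H) (hH : IsThreeLieBracket F brH)
    (μ : M →ₗ[F] M →ₗ[F] M →ₗ[F] H)
    (hμ12 : ∀ x y z : M, μ y x z = - μ x y z)
    (hμ23 : ∀ x y z : M, μ x z y = - μ x y z)
    (ρ : M →ₗ[F] M →ₗ[F] Module.End F H)
    (hρskew : ∀ x y : M, ρ x y = - ρ y x)
    (hρder : ∀ x y : M, IsDer3 F brH (ρ x y))
    (β : M →ₗ[F] H →ₗ[F] Module.End F H)
    (hβder : ∀ (x : M) (h : H), IsDer3 F brH (β x h))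
    (hβskew : ∀ (x : M) (h1 h2 : H), β x h1 h2 = - β x h2 h1)
    (hA : IsThreeLieBracket F (extBr F brM brH μ ρ β)) :
    IsRep3 F brM ρ ↔ ∀ x1 x2 x3 x4 : M, β x4 (μ x1 x2 x3) = 0 := by
  obtain ⟨-, hs, h12, h23, -⟩ := hH
  obtain ⟨-, ms, m12, m23, -⟩ := hM
  obtain ⟨-, -, -, -, hfi⟩ := hA
  have z1 : ∀ a b, brH 0 a b = 0 := fun a b => by simpa using hs 0 0 a b
  have z2 : ∀ a b, brH a 0 b = 0 := fun a b => by rw [h12, z1, neg_zero]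
  have z3 : ∀ a b, brH a b 0 = 0 := fun a b => by rw [h23, z2, neg_zero]
  have w1 : ∀ a b, brM 0 a b = 0 := fun a b => by simpa using ms 0 0 a b
  have w3 : ∀ a b, brM a b 0 = 0 := fun a b => by rw [m23, m12, w1, neg_zero, neg_zero]
  have key : ∀ x y z u : M, ∀ h : H, ρ (brM x y z) u h - β u (μ x y z) h
      = ρ x y (ρ z u h) + ρ y z (ρ x u h) + ρ z x (ρ y u h) := by
    intro x y z u h
    have e := congrArg Prod.snd (hfi (x, 0) (y, 0) (z, 0) (u, 0) (0, h))
    simp [extBr, z1, z2, z3, w1, w3] at e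
    rw [hβskew u h] at e
    rw [sub_eq_add_neg, e]
    abel
  have key2 : ∀ y z u v : M, ∀ h : H, ρ u v (ρ y z h) - ρ y z (ρ u v h)
      = ρ (brM u v y) z h - ρ (brM u v z) y h
        - β z (μ y u v) h + β y (μ z u v) h := by
    intro y z u v h
    have e := congrArg Prod.snd (hfi (0, h) (y, 0) (z, 0) (u, 0) (v, 0))
    simp [extBr, z1, z2, z3, w1, w3] at e
    rw [hβskew z h, hρskew y (brM z u v)] at e
    have c1 : ∀ w, brM u v w = brM w u v := fun w => by
      rw [m23, m12, neg_neg]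
    rw [c1, c1, e]
    simp only [LinearMap.neg_apply]
    abel
  constructor
  · rintro ⟨-, -, h3⟩ x y z u
    ext h
    have e := key x y z u h
    have e3 := LinearMap.congr_fun (h3 x y z u) h
    simp only [LinearMap.add_apply, Module.End.mul_apply] at e3
    rw [← e3] at e
    simpa using e
  · intro hb
    refine ⟨hρskew, ?_, ?_⟩
    · intro x1 x2 x3 x4
      ext h
      have e := key2 x3 x4 x1 x2 h
      simpa [hb] using e
    · intro x y z u
      ext h
      have e := key x y z u h
      simpa [hb] using e
end

section
/- Let A be a 3-Lie algebra over a field F with char F ≠ 2. Then A³ = A × A × A, equipped with the bracket [(x1,y1,z1),(x2,y2,z2),(x3,y3,z3)] = ([x1,y2,y3] + [x2,y3,y1] + [x3,y1,y2], [y1,y2,y3], [z1,z2,z3]), is a 3-Lie algebra: this bracket is trilinear, skew-symmetric, and satisfies the fundamental identity. -/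
/-- Theorem 4.1: for a 3-Lie algebra `A`, the exterior direct sum `A³` with the
bracket `tripleBr` is a 3-Lie algebra (trilinear, skew-symmetric, fundamental
identity). -/
theorem stmt9 {F A : Type*} [Field F] [AddCommGroup A] [Module F A]
    (hchar : (2 : F) ≠ 0)
    (br : A → A → A → A) (hbr : IsThreeLieBracket F br) :
    IsThreeLieBracket F (tripleBr br) := by
  obtain ⟨hadd, hsmul, h12, h23, hfi⟩ := hbr
  have cyc : ∀ x y z : A, br y z x = br x y z := by
    intro x y z
    rw [h23 y x z, h12 x y z, neg_neg]
  have cyc2 : ∀ x y z : A, br z x y = br x y z := by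
    intro x y z
    rw [← cyc z x y]
  have hadd2 : ∀ x y y' z : A, br x (y + y') z = br x y z + br x y' z := by
    intro x y y' z
    rw [← cyc x (y + y') z, hadd, cyc x y z, cyc x y' z]
  have hadd3 : ∀ x y z z' : A, br x y (z + z') = br x y z + br x y z' := by
    intro x y z z'
    rw [← cyc2 x y (z + z'), hadd, cyc2 x y z, cyc2 x y z']
  have hsmul2 : ∀ (c : F) (x y z : A), br x (c • y) z = c • br x y z := by
    intro c x y z
    rw [← cyc x (c • y) z, hsmul, cyc]
  have hsmul3 : ∀ (c : F) (x y z : A), br x y (c • z) = c • br x y z := by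
    intro c x y z
    rw [← cyc2 x y (c • z), hsmul, cyc2]
  have ht : tripleBr br = fun a b c =>
      (br a.1 b.2.1 c.2.1 + br a.2.1 b.1 c.2.1 + br a.2.1 b.2.1 c.1,
        br a.2.1 b.2.1 c.2.1, br a.2.2 b.2.2 c.2.2) := by
    funext a b c
    unfold tripleBr
    rw [cyc a.2.1 b.1 c.2.1, cyc2 a.2.1 b.2.1 c.1]
  rw [ht]
  refine ⟨?_, ?_, ?_, ?_, ?_⟩
  · rintro ⟨x, x2, x3⟩ ⟨x', x2', x3'⟩ ⟨y, y2, y3⟩ ⟨z, z2, z3⟩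
    simp only [Prod.mk_add_mk, Prod.mk.injEq, hadd, and_true]
    abel
  · rintro c ⟨x, x2, x3⟩ ⟨y, y2, y3⟩ ⟨z, z2, z3⟩
    simp only [Prod.smul_mk, hsmul, smul_add]
  · rintro ⟨x, x2, x3⟩ ⟨y, y2, y3⟩ ⟨z, z2, z3⟩
    simp only [Prod.neg_mk, Prod.mk.injEq]
    refine ⟨?_, h12 _ _ _, h12 _ _ _⟩
    rw [h12 x2 y z2, h12 x y2 z2, h12 x2 y2 z]
    abel
  · rintro ⟨x, x2, x3⟩ ⟨y, y2, y3⟩ ⟨z, z2, z3⟩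
    simp only [Prod.neg_mk, Prod.mk.injEq]
    refine ⟨?_, h23 _ _ _, h23 _ _ _⟩
    rw [h23 x y2 z2, h23 x2 y2 z, h23 x2 y z2]
    abel
  · rintro ⟨x, x2, x3⟩ ⟨y, y2, y3⟩ ⟨z, z2, z3⟩ ⟨u, u2, u3⟩ ⟨v, v2, v3⟩
    simp only [Prod.mk_add_mk, Prod.mk.injEq]
    refine ⟨?_, hfi _ _ _ _ _, hfi _ _ _ _ _⟩
    simp only [hadd, hadd2, hadd3]
    rw [hfi x y2 z2 u2 v2, hfi x2 y z2 u2 v2, hfi x2 y2 z u2 v2, hfi x2 y2 z2 u v2,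
      hfi x2 y2 z2 u2 v]
    abel
end

section
/- Let A = M ⊕ H be a (μ,ρ,β)-extension of H by M which is a 3-Lie algebra, and let (σ,τ) ∈ Der(M) × Der(H). Then the pair (σ,τ) is extendable if and only if there exists a linear map γ : M → H such that for all x, x1, x2, x3 ∈ M and h ∈ H: (i) τ(μ(x1,x2,x3)) + γ([x1,x2,x3]_M) = μ(σx1,x2,x3) + μ(x1,σx2,x3) + μ(x1,x2,σx3) + ρ(x1,x2)γ(x3) + ρ(x3,x1)γ(x2) + ρ(x2,x3)γ(x1); (ii) τ∘ρ(x1,x2) − ρ(x1,x2)∘τ = ρ(σx1,x2) + ρ(x1,σx2) − β(x2,γ(x1)) + β(x1,γ(x2)) as linear maps H → H; (iii) τ∘β(x,h) − β(x,h)∘τ = β(σx,h) + β(x,τh) + ad(γ(x),h) as linear maps H → H, where ad(a,b) denotes the map c ↦ [a,b,c]_H. In this case an extension δ ∈ Der(A) is given by δ(x + h) = σx + γ(x) + τh for x ∈ M, h ∈ H. -/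
/-- Theorem 4.3: for a `(μ,ρ,β)`-extension 3-Lie algebra `A = M ⊕ H` and
`(σ,τ) ∈ Der(M) × Der(H)`, the pair `(σ,τ)` is extendable iff there is a linear
map `γ : M → H` satisfying (i), (ii), (iii); in this case the extension is
`δ(x + h) = σx + γ(x) + τh`. -/
theorem stmt12 {F M H : Type*} [Field F] [AddCommGroup M] [Module F M]
    [AddCommGroup H] [Module F H] (hchar : (2 : F) ≠ 0)
    (brM : M → M → M → M) (hM : IsThreeLieBracket F brM)
    (brH : H → H → H → H) (hH : IsThreeLieBracket F brH)
    (μ : M →ₗ[F] M →ₗ[F] M →ₗ[F] H)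
    (hμ12 : ∀ x y z : M, μ y x z = - μ x y z)
    (hμ23 : ∀ x y z : M, μ x z y = - μ x y z)
    (ρ : M →ₗ[F] M →ₗ[F] Module.End F H)
    (hρskew : ∀ x y : M, ρ x y = - ρ y x)
    (hρder : ∀ x y : M, IsDer3 F brH (ρ x y))
    (β : M →ₗ[F] H →ₗ[F] Module.End F H)
    (hβder : ∀ (x : M) (h : H), IsDer3 F brH (β x h))
    (hβskew : ∀ (x : M) (h1 h2 : H), β x h1 h2 = - β x h2 h1)
    (hA : IsThreeLieBracket F (extBr F brM brH μ ρ β))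
    (σ : Module.End F M) (hσ : IsDer3 F brM σ)
    (τ : Module.End F H) (hτ : IsDer3 F brH τ) :
    ((∃ δ : Module.End F (M × H),
        IsDer3 F (extBr F brM brH μ ρ β) δ ∧
        (∀ h : H, δ (0, h) = (0, τ h)) ∧
        (∀ a : M × H, (δ a).1 = σ a.1)) ↔
      (∃ γ : M →ₗ[F] H,
        (∀ x1 x2 x3 : M,
          τ (μ x1 x2 x3) + γ (brM x1 x2 x3)
            = μ (σ x1) x2 x3 + μ x1 (σ x2) x3 + μ x1 x2 (σ x3)
              + ρ x1 x2 (γ x3) + ρ x3 x1 (γ x2) + ρ x2 x3 (γ x1)) ∧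
        (∀ x1 x2 : M,
          τ * ρ x1 x2 - ρ x1 x2 * τ
            = ρ (σ x1) x2 + ρ x1 (σ x2) - β x2 (γ x1) + β x1 (γ x2)) ∧
        (∀ (x : M) (h h' : H),
          τ (β x h h') - β x h (τ h')
            = β (σ x) h h' + β x (τ h) h' + brH (γ x) h h'))) ∧
    (∀ γ : M →ₗ[F] H,
      (∀ x1 x2 x3 : M,
          τ (μ x1 x2 x3) + γ (brM x1 x2 x3)
            = μ (σ x1) x2 x3 + μ x1 (σ x2) x3 + μ x1 x2 (σ x3)
              + ρ x1 x2 (γ x3) + ρ x3 x1 (γ x2) + ρ x2 x3 (γ x1)) →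
      (∀ x1 x2 : M,
          τ * ρ x1 x2 - ρ x1 x2 * τ
            = ρ (σ x1) x2 + ρ x1 (σ x2) - β x2 (γ x1) + β x1 (γ x2)) →
      (∀ (x : M) (h h' : H),
          τ (β x h h') - β x h (τ h')
            = β (σ x) h h' + β x (τ h) h' + brH (γ x) h h') →
      ∀ δ : Module.End F (M × H),
        (∀ (x : M) (h : H), δ (x, h) = (σ x, γ x + τ h)) →
        (IsDer3 F (extBr F brM brH μ ρ β) δ ∧
         (∀ h : H, δ (0, h) = (0, τ h)) ∧
         (∀ a : M × H, (δ a).1 = σ a.1))) := by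
  obtain ⟨hadd, hsmul, h12, h23, -⟩ := hH
  obtain ⟨hMadd, hMsmul, hM12, hM23, -⟩ := hM
  have cyc : ∀ x y z : H, brH x y z = brH y z x := by
    intro x y z
    rw [h23 y x z, h12 x y z, neg_neg]
  have add2 : ∀ x y y' z : H, brH x (y + y') z = brH x y z + brH x y' z := by
    intro x y y' z
    rw [cyc, hadd, ← cyc x, ← cyc x]
  have add3 : ∀ x y z z' : H, brH x y (z + z') = brH x y z + brH x y z' := by
    intro x y z z'
    rw [← cyc, hadd, cyc z, cyc z']
  have z1 : ∀ y z : H, brH 0 y z = 0 := by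
    intro y z
    simpa using hsmul 0 0 y z
  have z2 : ∀ y z : H, brH y 0 z = 0 := by
    intro y z
    rw [cyc, z1]
  have z3 : ∀ y z : H, brH y z 0 = 0 := by
    intro y z
    rw [← cyc, z1]
  have w1 : ∀ y z : M, brM 0 y z = 0 := by
    intro y z
    simpa using hMsmul 0 0 y z
  have w2 : ∀ y z : M, brM y 0 z = 0 := by
    intro y z
    rw [hM12, w1, neg_zero]
  have w3 : ∀ y z : M, brM y z 0 = 0 := by
    intro y z
    rw [hM23, w2, neg_zero]
  have key : ∀ γ : M →ₗ[F] H,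
      (∀ x1 x2 x3 : M,
          τ (μ x1 x2 x3) + γ (brM x1 x2 x3)
            = μ (σ x1) x2 x3 + μ x1 (σ x2) x3 + μ x1 x2 (σ x3)
              + ρ x1 x2 (γ x3) + ρ x3 x1 (γ x2) + ρ x2 x3 (γ x1)) →
      (∀ x1 x2 : M,
          τ * ρ x1 x2 - ρ x1 x2 * τ
            = ρ (σ x1) x2 + ρ x1 (σ x2) - β x2 (γ x1) + β x1 (γ x2)) →
      (∀ (x : M) (h h' : H),
          τ (β x h h') - β x h (τ h')
            = β (σ x) h h' + β x (τ h) h' + brH (γ x) h h') →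
      ∀ δ : Module.End F (M × H),
        (∀ (x : M) (h : H), δ (x, h) = (σ x, γ x + τ h)) →
        (IsDer3 F (extBr F brM brH μ ρ β) δ ∧
         (∀ h : H, δ (0, h) = (0, τ h)) ∧
         (∀ a : M × H, (δ a).1 = σ a.1)) := by
    intro γ h1 h2 h3 δ hδ
    refine ⟨?_, fun h => by simp [hδ], fun a => by rw [← Prod.mk.eta (p := a), hδ]⟩
    have e1 : ∀ x1 x2 x3 : M, τ (μ x1 x2 x3) = μ (σ x1) x2 x3 + μ x1 (σ x2) x3
        + μ x1 x2 (σ x3) + ρ x1 x2 (γ x3) + ρ x3 x1 (γ x2) + ρ x2 x3 (γ x1)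
        - γ (brM x1 x2 x3) := fun x1 x2 x3 => eq_sub_of_add_eq (h1 x1 x2 x3)
    have e2 : ∀ (x1 x2 : M) (h : H), τ (ρ x1 x2 h) = ρ (σ x1) x2 h + ρ x1 (σ x2) h
        - β x2 (γ x1) h + β x1 (γ x2) h + ρ x1 x2 (τ h) := by
      intro x1 x2 h
      have := LinearMap.congr_fun (h2 x1 x2) h
      simp only [LinearMap.sub_apply, LinearMap.add_apply, Module.End.mul_apply] at this
      exact eq_add_of_sub_eq this
    have e3 : ∀ (x : M) (h h' : H), τ (β x h h') = β (σ x) h h' + β x (τ h) h'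
        + brH (γ x) h h' + β x h (τ h') := fun x h h' => eq_add_of_sub_eq (h3 x h h')
    rintro ⟨x, a⟩ ⟨y, b⟩ ⟨z, c⟩
    simp only [extBr, hδ]
    refine Prod.ext (hσ x y z) ?_
    simp only [Prod.snd_add, map_add, LinearMap.add_apply, e1, e2, e3, hτ a b c, hadd, add2, add3]
    rw [cyc a (γ y) c, cyc a b (γ z), cyc b (γ z) a, hβskew x b (γ z), hβskew y c (γ x),
      hβskew z a (γ y)]
    abel
  refine ⟨⟨?_, ?_⟩, key⟩
  · rintro ⟨δ, hd, hδ0, hδ1⟩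
    have hs : ∀ (x : M) (h : H), δ (x, h) = (σ x, (δ (x, 0)).2 + τ h) := by
      intro x h
      have : ((x, h) : M × H) = (x, 0) + (0, h) := by simp
      refine Prod.ext (hδ1 _) ?_
      rw [this, map_add, hδ0]
      simp
    let γ : M →ₗ[F] H := LinearMap.snd F M H ∘ₗ δ ∘ₗ LinearMap.inl F M H
    have hg : ∀ x, γ x = (δ (x, 0)).2 := fun x => rfl
    simp only [← hg] at hs
    clear_value γ
    refine ⟨γ, ?_, ?_, ?_⟩
    · intro x y z
      have := congrArg Prod.snd (hd (x, 0) (y, 0) (z, 0))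
      simp only [extBr, hs, Prod.snd_add, map_zero, LinearMap.zero_apply, z1, z2, z3, add_zero,
        zero_add] at this
      rw [add_comm, this]
      abel
    · intro x y
      ext h
      have := congrArg Prod.snd (hd (x, 0) (y, 0) (0, h))
      simp only [extBr, hs, Prod.snd_add, map_zero, LinearMap.zero_apply, z1, z2, z3, w3, add_zero,
        zero_add] at this
      simp only [LinearMap.sub_apply, LinearMap.add_apply, Module.End.mul_apply]
      rw [this, hβskew y h]
      abel
    · intro x h h'
      have := congrArg Prod.snd (hd (x, 0) (0, h) (0, h'))
      simp only [extBr, hs, Prod.snd_add, map_zero, LinearMap.zero_apply, z1, z2, z3, w2, w3,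
        add_zero, zero_add] at this
      rw [this]
      abel
  · rintro ⟨γ, h1, h2, h3⟩
    let δ : Module.End F (M × H) := LinearMap.prod (σ ∘ₗ LinearMap.fst F M H)
      (γ ∘ₗ LinearMap.fst F M H + τ ∘ₗ LinearMap.snd F M H)
    exact ⟨δ, key γ h1 h2 h3 δ (fun x h => rfl)⟩
end

section
/- Let A = M ⊕ H be a (μ,ρ)-extension of H by M (the case β = 0) which is a 3-Lie algebra, suppose (H, ρ) is an M-module, and let (σ,τ) ∈ Der(M) × Der(H). Then the pair (σ,τ) is extendable if and only if there exists a linear map γ : M → H with γ(M) ⊆ Z(H) such that for all x1, x2, x3 ∈ M: (i) τ(μ(x1,x2,x3)) + γ([x1,x2,x3]_M) = μ(σx1,x2,x3) + μ(x1,σx2,x3) + μ(x1,x2,σx3) + ρ(x1,x2)γ(x3) + ρ(x3,x1)γ(x2) + ρ(x2,x3)γ(x1); and (ii) τ∘ρ(x1,x2) − ρ(x1,x2)∘τ = ρ(σx1,x2) + ρ(x1,σx2) as linear maps H → H. -/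
/-- Corollary 4.4: for a `(μ,ρ)`-extension 3-Lie algebra (`β = 0`) with `(H,ρ)`
an `M`-module, `(σ,τ)` is extendable iff there is a linear `γ : M → H` with
`γ(M) ⊆ Z(H)` satisfying (i) and (ii). -/
theorem stmt13 {F M H : Type*} [Field F] [AddCommGroup M] [Module F M]
    [AddCommGroup H] [Module F H] (hchar : (2 : F) ≠ 0)
    (brM : M → M → M → M) (hM : IsThreeLieBracket F brM)
    (brH : H → H → H → H) (hH : IsThreeLieBracket F brH)
    (μ : M →ₗ[F] M →ₗ[F] M →ₗ[F] H)
    (hμ12 : ∀ x y z : M, μ y x z = - μ x y z)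
    (hμ23 : ∀ x y z : M, μ x z y = - μ x y z)
    (ρ : M →ₗ[F] M →ₗ[F] Module.End F H)
    (hρskew : ∀ x y : M, ρ x y = - ρ y x)
    (hρder : ∀ x y : M, IsDer3 F brH (ρ x y))
    (hrep : IsRep3 F brM ρ)
    (hA : IsThreeLieBracket F (extBr F brM brH μ ρ 0))
    (σ : Module.End F M) (hσ : IsDer3 F brM σ)
    (τ : Module.End F H) (hτ : IsDer3 F brH τ) :
    (∃ δ : Module.End F (M × H),
        IsDer3 F (extBr F brM brH μ ρ 0) δ ∧
        (∀ h : H, δ (0, h) = (0, τ h)) ∧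
        (∀ a : M × H, (δ a).1 = σ a.1)) ↔
      (∃ γ : M →ₗ[F] H,
        (∀ (x : M) (a b : H), brH (γ x) a b = 0) ∧
        (∀ x1 x2 x3 : M,
          τ (μ x1 x2 x3) + γ (brM x1 x2 x3)
            = μ (σ x1) x2 x3 + μ x1 (σ x2) x3 + μ x1 x2 (σ x3)
              + ρ x1 x2 (γ x3) + ρ x3 x1 (γ x2) + ρ x2 x3 (γ x1)) ∧
        (∀ x1 x2 : M,
          τ * ρ x1 x2 - ρ x1 x2 * τ = ρ (σ x1) x2 + ρ x1 (σ x2))) := by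
  obtain ⟨hMa, hMs, hM12, hM23, -⟩ := hM
  obtain ⟨hHa, hHs, hH12, hH23, -⟩ := hH
  have M1 : ∀ y z, brM 0 y z = 0 := fun y z => by simpa using hMs 0 0 y z
  have M2 : ∀ y z, brM y 0 z = 0 := fun y z => by rw [hM12, M1, neg_zero]
  have M3 : ∀ y z, brM y z 0 = 0 := fun y z => by rw [hM23, M2, neg_zero]
  have H1 : ∀ y z, brH 0 y z = 0 := fun y z => by simpa using hHs 0 0 y z
  have H2 : ∀ y z, brH y 0 z = 0 := fun y z => by rw [hH12, H1, neg_zero]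
  have H3 : ∀ y z, brH y z 0 = 0 := fun y z => by rw [hH23, H2, neg_zero]
  have Ha2 : ∀ x y y' z, brH x (y + y') z = brH x y z + brH x y' z := fun x y y' z => by
    rw [hH12 (y + y') x z, hHa, hH12 y x z, hH12 y' x z, neg_add]
  have Ha3 : ∀ x y z z', brH x y (z + z') = brH x y z + brH x y z' := fun x y z z' => by
    rw [hH23 x (z + z') y, Ha2, hH23 x z y, hH23 x z' y, neg_add]
  constructor
  · rintro ⟨δ, hδ, hδH, hδM⟩
    have key : ∀ x : M, δ (x, 0) = (σ x, (δ (x, 0)).2) := fun x =>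
      Prod.ext (hδM (x, 0)) rfl
    have key2 : ∀ (x : M) (h : H), (δ (x, h)).2 = (δ (x, 0)).2 + τ h := fun x h => by
      have : ((x, h) : M × H) = (x, 0) + (0, h) := by simp
      rw [this, map_add, hδH]; rfl
    refine ⟨(LinearMap.snd F M H) ∘ₗ δ ∘ₗ (LinearMap.inl F M H), ?_, ?_, ?_⟩
    · intro x a b
      have h := congrArg Prod.snd (hδ (x, 0) (0, a) (0, b))
      simpa [extBr, hδH, hδM, M1, M2, M3, H1, H2, H3] using h.symm
    · intro x y z
      have h := congrArg Prod.snd (hδ (x, 0) (y, 0) (z, 0))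
      simp only [extBr] at h
      rw [key2 (brM x y z)] at h
      simp [hδM, H1, H2, H3] at h ⊢
      rw [add_comm, h]
      abel
    · intro x y
      ext k
      have h := congrArg Prod.snd (hδ (x, 0) (y, 0) (0, k))
      simp [extBr, hδH, hδM, M1, M2, M3, H1, H2, H3] at h
      simp [h]
  · rintro ⟨γ, hZ, h1, h2⟩
    have Z2 : ∀ x a b, brH a (γ x) b = 0 := fun x a b => by rw [hH12, hZ, neg_zero]
    have Z3 : ∀ x a b, brH a b (γ x) = 0 := fun x a b => by rw [hH23, Z2, neg_zero]
    have h2' : ∀ x y h, τ (ρ x y h) = ρ x y (τ h) + ρ (σ x) y h + ρ x (σ y) h := by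
      intro x y h
      have := LinearMap.congr_fun (h2 x y) h
      simp only [LinearMap.sub_apply, Module.End.mul_apply, LinearMap.add_apply] at this
      rw [add_assoc, ← this]; abel
    refine ⟨LinearMap.prod (σ ∘ₗ LinearMap.fst F M H)
      (γ ∘ₗ LinearMap.fst F M H + τ ∘ₗ LinearMap.snd F M H), ?_, ?_, ?_⟩
    · rintro ⟨x, a⟩ ⟨y, b⟩ ⟨z, c⟩
      refine Prod.ext ?_ ?_
      · simpa [extBr] using hσ x y z
      · have e := h1 x y z
        rw [add_comm, ← eq_sub_iff_add_eq] at e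
        simp [extBr, hHa, Ha2, Ha3, hZ, Z2, Z3, h2', hτ a b c, e]
        abel
    · intro h; simp
    · intro a; simp
end

section
/- Let A = M ⊕ H be a (μ,ρ,β)-extension of H by M which is a 3-Lie algebra, and let (σ,τ) ∈ Der(M) × Der(H). Set f_σ : M → M³, f_σ(x) = (σx, x, x), and f_τ : H → H³, f_τ(h) = (τh, h, h). Then the pair (σ,τ) can be extended to a derivation of A (i.e. there exists δ ∈ Der(A) with δ∘i = i∘τ and p∘δ = σ∘p) if and only if there exists a 3-Lie algebra homomorphism g : A → A³ with g∘i = (i×i×i)∘f_τ and (p×p×p)∘g = f_σ∘p. -/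
/-- The coordinatewise inclusion `i × i × i : H³ → A³` for `A = M ⊕ H`. -/
def inr3 (F : Type*) [Field F] (M H : Type*) [AddCommGroup M] [Module F M]
    [AddCommGroup H] [Module F H] :
    (H × H × H) →ₗ[F] ((M × H) × (M × H) × (M × H)) :=
  (LinearMap.inr F M H).prodMap ((LinearMap.inr F M H).prodMap (LinearMap.inr F M H))

/-- The coordinatewise projection `p × p × p : A³ → M³` for `A = M ⊕ H`. -/
def fst3 (F : Type*) [Field F] (M H : Type*) [AddCommGroup M] [Module F M]
    [AddCommGroup H] [Module F H] :
    ((M × H) × (M × H) × (M × H)) →ₗ[F] (M × M × M) :=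
  (LinearMap.fst F M H).prodMap ((LinearMap.fst F M H).prodMap (LinearMap.fst F M H))

/-- Theorem 4.9: `(σ,τ) ∈ Der(M) × Der(H)` extends to a derivation of the
`(μ,ρ,β)`-extension `A = M ⊕ H` iff the pair of 3-Lie homomorphisms
`(f_σ, f_τ)` extends to a 3-Lie homomorphism `g : A → A³` (i.e. `g∘i = (i×i×i)∘f_τ`
and `(p×p×p)∘g = f_σ∘p`). -/
theorem stmt18 {F M H : Type*} [Field F] [AddCommGroup M] [Module F M]
    [AddCommGroup H] [Module F H] (hchar : (2 : F) ≠ 0)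
    (brM : M → M → M → M) (hM : IsThreeLieBracket F brM)
    (brH : H → H → H → H) (hH : IsThreeLieBracket F brH)
    (μ : M →ₗ[F] M →ₗ[F] M →ₗ[F] H)
    (hμ12 : ∀ x y z : M, μ y x z = - μ x y z)
    (hμ23 : ∀ x y z : M, μ x z y = - μ x y z)
    (ρ : M →ₗ[F] M →ₗ[F] Module.End F H)
    (hρskew : ∀ x y : M, ρ x y = - ρ y x)
    (hρder : ∀ x y : M, IsDer3 F brH (ρ x y))
    (β : M →ₗ[F] H →ₗ[F] Module.End F H)
    (hβder : ∀ (x : M) (h : H), IsDer3 F brH (β x h))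
    (hβskew : ∀ (x : M) (h1 h2 : H), β x h1 h2 = - β x h2 h1)
    (hA : IsThreeLieBracket F (extBr F brM brH μ ρ β))
    (σ : Module.End F M) (hσ : IsDer3 F brM σ)
    (τ : Module.End F H) (hτ : IsDer3 F brH τ) :
    (∃ δ : Module.End F (M × H),
        IsDer3 F (extBr F brM brH μ ρ β) δ ∧
        (∀ h : H, δ (0, h) = (0, τ h)) ∧
        (∀ a : M × H, (δ a).1 = σ a.1)) ↔
    (∃ g : (M × H) →ₗ[F] ((M × H) × (M × H) × (M × H)),
        (∀ a b c : M × H,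
          g (extBr F brM brH μ ρ β a b c)
            = tripleBr (extBr F brM brH μ ρ β) (g a) (g b) (g c)) ∧
        (∀ h : H, g (0, h) = ((0, τ h), (0, h), (0, h))) ∧
        (∀ a : M × H, fst3 F M H (g a) = (σ a.1, a.1, a.1))) := by
  obtain ⟨-, -, h12, h23, -⟩ := hA
  generalize extBr F brM brH μ ρ β = br at *
  have cyc : ∀ a b c, br b c a = br a b c := fun a b c => by
    rw [h23 b a c, h12 a b c, neg_neg]
  constructor
  · rintro ⟨δ, hδ, hi, hp⟩
    refine ⟨δ.prod (LinearMap.id.prod LinearMap.id), fun a b c => ?_, fun h => ?_, fun a => ?_⟩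
    · have h1 := hδ a b c
      have h2 := cyc a (δ b) c
      have h3 := cyc (δ c) a b
      change (δ (br a b c), br a b c, br a b c) =
        (br (δ a) b c + br (δ b) c a + br (δ c) a b, br a b c, br a b c)
      rw [h1, h2, h3]
    · simp [hi]
    · simp [fst3, hp]
  · rintro ⟨g, hg, hi, hp⟩
    let g1 : Module.End F (M × H) := LinearMap.fst F _ _ ∘ₗ g
    let g2 : Module.End F (M × H) := LinearMap.fst F _ _ ∘ₗ LinearMap.snd F _ _ ∘ₗ g
    have e1 : ∀ a b c, g1 (br a b c)
        = br (g1 a) (g2 b) (g2 c) + br (g1 b) (g2 c) (g2 a) + br (g1 c) (g2 a) (g2 b) :=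
      fun a b c => congrArg (fun t => t.1) (hg a b c)
    have e2 : ∀ a b c, g2 (br a b c) = br (g2 a) (g2 b) (g2 c) :=
      fun a b c => congrArg (fun t => t.2.1) (hg a b c)
    have i1 : ∀ h, g1 (0, h) = (0, τ h) := fun h => congrArg (fun t => t.1) (hi h)
    have i2 : ∀ h, g2 (0, h) = (0, h) := fun h => congrArg (fun t => t.2.1) (hi h)
    have p1 : ∀ a, (g1 a).1 = σ a.1 := fun a => congrArg (fun t => t.1) (hp a)
    have p2 : ∀ a, (g2 a).1 = a.1 := fun a => congrArg (fun t => t.2.1) (hp a)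
    clear_value g1 g2
    have key : ∀ a, g2 (g2 a) - g2 a = g2 a - a := fun a => by
      have h : g2 a - a = (0, (g2 a - a).2) := by
        ext <;> simp [p2]
      rw [← map_sub, h, i2]
    let N : Module.End F (M × H) := LinearMap.id + LinearMap.id - g2
    have hN : ∀ a, N a = a + a - g2 a := fun a => rfl
    clear_value N
    have gN : ∀ a, g2 (N a) = a := fun a => by
      rw [hN, map_sub, map_add, eq_add_of_sub_eq (key a)]; abel
    have Ng : ∀ a, N (g2 a) = a := fun a => by
      rw [hN, eq_add_of_sub_eq (key a)]; abel
    have Nbr : ∀ a b c, N (br a b c) = br (N a) (N b) (N c) := fun a b c => by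
      rw [← Ng (br (N a) (N b) (N c)), e2, gN, gN, gN]
    refine ⟨N ∘ₗ g1, fun a b c => ?_, fun h => ?_, fun a => ?_⟩
    · have h2 := cyc a (N (g1 b)) c
      have h3 := cyc (N (g1 c)) a b
      simp only [LinearMap.comp_apply, e1, map_add, Nbr, Ng, h2, h3]
    · simp [hN, i1, i2]
    · simp [hN, p1, p2]
end
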